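/- Let g : G_ℤ → ℤ be the group homomorphism defined by g(X_k) = 1 + |k| and g(Y_k) = −1 − |k|. Then |g(r)| ≤ 1 for every element r of the form ±(X_k + Y_k), ±(X_k + Y_{k+1}), ±(X_{k+1} − X_k) or ±(Y_{k+1} − Y_k) with k ∈ ℤ. Consequently, since HN(D_n) = n·X_n + n·X_{−n} + (2n−1)·X_{−1} + (4n−1)·Y_0 satisfies g(HN(D_n)) = 2n² + 2n − 1, and since each framed Reidemeister move changes HN by an element of this form while HN of the trivial diagram is 0, any sequence of framed Reidemeister moves unknotting D_n has length at least 2n² + 2n − 1. -/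

import Mathlib

/-!
The Hass–Nowik lower bound for framed unknotting of `Dₙ` (Section 3.2 of the
paper): with `g : G_ℤ → ℤ` the homomorphism `g(X_k) = 1 + |k|`,
`g(Y_k) = −1 − |k|`, every element of the set `R` of possible changes of `HN` under
framed Reidemeister moves satisfies `|g(r)| ≤ 1`; since
`HN(Dₙ) = n·X_n + n·X_{−n} + (2n−1)·X_{−1} + (4n−1)·Y_0` gives
`g(HN(Dₙ)) = 2n² + 2n − 1` and `HN` of the trivial diagram is `0`, any sequence of
framed Reidemeister moves unknotting `Dₙ` has length at least `2n² + 2n − 1`.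

Knot diagrams are axiomatized by the combinatorial data relevant to `HN`.  A framed
unknotting sequence is a sequence of diagrams ending at the trivial (crossingless)
diagram, each step changing `HN` by an element of `R` (the changes of `HN` under
framed Reidemeister moves).
-/

/-- Combinatorial data of an oriented knot diagram relevant to the Hass–Nowik
invariant. -/
structure HNDiagram where
  Crossing : Type
  [fintypeCrossing : Fintype Crossing]
  sgn : Crossing → ℤ
  sgn_unit : ∀ c, sgn c = 1 ∨ sgn c = -1
  /-- the linking number `lk(D^c)` of the smoothing at `c` -/
  lk : Crossing → ℤ

attribute [instance] HNDiagram.fintypeCrossing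

/-- The free abelian group `G_ℤ` with basis `{X_k, Y_k : k ∈ ℤ}`. -/
abbrev GZ : Type := (ℤ ⊕ ℤ) →₀ ℤ

/-- The basis element `X_k` of `G_ℤ`. -/
noncomputable def X (k : ℤ) : GZ := Finsupp.single (Sum.inl k) 1

/-- The basis element `Y_k` of `G_ℤ`. -/
noncomputable def Y (k : ℤ) : GZ := Finsupp.single (Sum.inr k) 1

/-- The Hass–Nowik invariant
`HN(D) = ∑_{c positive} X_{lk(D^c)} + ∑_{c negative} Y_{lk(D^c)}`. -/
noncomputable def HN (D : HNDiagram) : GZ :=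
  ∑ c, if D.sgn c = 1 then X (D.lk c) else Y (D.lk c)

/-- The set `R` of the possible changes of `HN` under framed Reidemeister moves:
`±(X_k + Y_k)`, `±(X_k + Y_{k+1})`, `±(X_{k+1} − X_k)`, `±(Y_{k+1} − Y_k)` for
`k ∈ ℤ`. -/
def Rset : Set GZ :=
  {r | ∃ k : ℤ,
    r = X k + Y k ∨ r = -(X k + Y k) ∨
    r = X k + Y (k + 1) ∨ r = -(X k + Y (k + 1)) ∨
    r = X (k + 1) - X k ∨ r = -(X (k + 1) - X k) ∨
    r = Y (k + 1) - Y k ∨ r = -(Y (k + 1) - Y k)}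

/-- Let `g : G_ℤ → ℤ` be the homomorphism with `g(X_k) = 1 + |k|` and
`g(Y_k) = −1 − |k|`.  Then `|g(r)| ≤ 1` for every `r ∈ R`.  Consequently, for every
`n ≥ 1` and every diagram `Dₙ` with
`HN(Dₙ) = n·X_n + n·X_{−n} + (2n−1)·X_{−1} + (4n−1)·Y_0` we have
`g(HN(Dₙ)) = 2n² + 2n − 1`, and any sequence of framed Reidemeister moves (each of
which changes `HN` by an element of `R`) transforming `Dₙ` into the trivial
(crossingless) diagram has length at least `2n² + 2n − 1`. -/
theorem hass_nowik_framed_lower_bound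
    (g : GZ →+ ℤ)
    (hgX : ∀ k : ℤ, g (X k) = 1 + |k|)
    (hgY : ∀ k : ℤ, g (Y k) = -1 - |k|) :
    (∀ r ∈ Rset, |g r| ≤ 1) ∧
    (∀ (Dn : HNDiagram) (n : ℕ), 1 ≤ n →
      HN Dn = (n : ℤ) • X (n : ℤ) + (n : ℤ) • X (-(n : ℤ)) +
        (2 * (n : ℤ) - 1) • X (-1) + (4 * (n : ℤ) - 1) • Y 0 →
      g (HN Dn) = 2 * (n : ℤ) ^ 2 + 2 * n - 1 ∧
      (∀ (m : ℕ) (Ds : Fin (m + 1) → HNDiagram),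
        Ds 0 = Dn → IsEmpty (Ds (Fin.last m)).Crossing →
        (∀ i : Fin m, HN (Ds i.succ) - HN (Ds i.castSucc) ∈ Rset) →
        2 * (n : ℤ) ^ 2 + 2 * n - 1 ≤ m)) := by
  have hR : ∀ r ∈ Rset, |g r| ≤ 1 := by
    rintro r ⟨k, hk⟩
    have h1 : |k + 1| ≤ |k| + 1 := by simpa using abs_add_le k 1
    have h2 : |k| ≤ |k + 1| + 1 := by
      have := abs_add_le (k + 1) (-1)
      simpa using this
    rw [abs_le]
    rcases hk with h | h | h | h | h | h | h | h <;> subst h <;>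
      simp only [map_add, map_sub, map_neg, hgX, hgY] <;> constructor <;> linarith
  refine ⟨hR, ?_⟩
  intro Dn n hn hHN
  have hval : g (HN Dn) = 2 * (n : ℤ) ^ 2 + 2 * n - 1 := by
    rw [hHN]
    simp only [map_add, map_zsmul, hgX, hgY, smul_eq_mul, abs_neg, Nat.abs_cast, abs_one,
      abs_zero]
    ring
  refine ⟨hval, ?_⟩
  intro m Ds h0 hlast hstep
  have key : ∀ i : Fin (m + 1), g (HN (Ds 0)) - g (HN (Ds i)) ≤ (i : ℕ) := by
    intro i
    induction i using Fin.induction with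
    | zero => simp
    | succ i ih =>
      have h := (abs_le.mp (hR _ (hstep i))).1
      rw [map_sub] at h
      simp only [Fin.val_castSucc, Fin.val_succ] at ih ⊢
      push_cast
      linarith
  have hz : HN (Ds (Fin.last m)) = 0 := by
    unfold HN
    exact Finset.sum_of_isEmpty _
  have hk := key (Fin.last m)
  rw [hz, h0, hval, map_zero, Fin.val_last] at hk
  linarith
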